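/- Let κ ∈ ℕ* with κ ≥ 2, and let x, y ∈ [−1, 1]. Then U_{ακ−1}(x)·U_{βκ−1}(y) − U_{ακ−1}(y)·U_{βκ−1}(x) = 0 for all α, β ∈ ℕ* if and only if U_{κ−1}(x) = 0, or U_{κ−1}(y) = 0, or T_κ(x) = T_κ(y). -/

import Mathlib

open Real

/-- Chebyshev polynomial of the first kind, as a real function. -/
noncomputable def chebT (n : ℕ) (x : ℝ) : ℝ := (Polynomial.Chebyshev.T ℝ n).eval x

/-- Chebyshev polynomial of the second kind, as a real function. -/
noncomputable def chebU (n : ℕ) (x : ℝ) : ℝ := (Polynomial.Chebyshev.U ℝ n).eval x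

open Polynomial in
theorem chebU_mul_sub_one (a k : ℕ) (ha : 1 ≤ a) (hk : 1 ≤ k) (x : ℝ) :
    chebU (a * k - 1) x = chebU (a - 1) (chebT k x) * chebU (k - 1) x := by
  have h := congrArg derivative (Polynomial.Chebyshev.T_mul ℝ (a : ℤ) (k : ℤ))
  rw [derivative_comp, Polynomial.Chebyshev.T_derivative_eq_U,
    Polynomial.Chebyshev.T_derivative_eq_U, Polynomial.Chebyshev.T_derivative_eq_U] at h
  have h2 := congrArg (Polynomial.eval x) h
  have hak : 1 ≤ a * k := Nat.mul_pos ha hk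
  have ha0 : (a : ℝ) ≠ 0 := by positivity
  have hk0 : (k : ℝ) ≠ 0 := by positivity
  simp only [chebU, chebT]
  push_cast [Nat.cast_sub hak, Nat.cast_sub ha, Nat.cast_sub hk]
  simp only [eval_mul, eval_comp, Int.cast_mul, Int.cast_natCast, eval_natCast] at h2
  apply mul_left_cancel₀ (mul_ne_zero ha0 hk0)
  linear_combination h2

/-- For `x, y ∈ [-1,1]`, all the commutators `[U_{ακ-1}(x), U_{βκ-1}(y)]` vanish
iff `U_{κ-1}(x) = 0`, or `U_{κ-1}(y) = 0`, or `T_κ(x) = T_κ(y)`. -/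
theorem commutators_vanish_iff (κ : ℕ) (hκ : 2 ≤ κ) (x y : ℝ)
    (hx : x ∈ Set.Icc (-1 : ℝ) 1) (hy : y ∈ Set.Icc (-1 : ℝ) 1) :
    (∀ α β : ℕ, 1 ≤ α → 1 ≤ β →
        chebU (α * κ - 1) x * chebU (β * κ - 1) y
          - chebU (α * κ - 1) y * chebU (β * κ - 1) x = 0) ↔
      chebU (κ - 1) x = 0 ∨ chebU (κ - 1) y = 0 ∨ chebT κ x = chebT κ y := by
  have hk : 1 ≤ κ := by omega
  constructor
  · intro h
    have h1 := h 1 2 le_rfl (by norm_num)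
    rw [chebU_mul_sub_one 1 κ le_rfl hk, chebU_mul_sub_one 2 κ (by norm_num) hk,
      chebU_mul_sub_one 1 κ le_rfl hk, chebU_mul_sub_one 2 κ (by norm_num) hk] at h1
    have e0 : ∀ z, chebU (1 - 1) z = 1 := fun z => by simp [chebU]
    have e1 : ∀ z, chebU (2 - 1) z = 2 * z := fun z => by simp [chebU]
    simp only [e0, e1] at h1
    have h2 : chebU (κ - 1) x * (chebU (κ - 1) y * (chebT κ x - chebT κ y)) = 0 := by
      linear_combination (-1 / 2) * h1
    rcases mul_eq_zero.1 h2 with h3 | h3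
    · exact Or.inl h3
    · rcases mul_eq_zero.1 h3 with h4 | h4
      · exact Or.inr (Or.inl h4)
      · exact Or.inr (Or.inr (sub_eq_zero.1 h4))
  · intro h α β hα hβ
    rw [chebU_mul_sub_one α κ hα hk, chebU_mul_sub_one β κ hβ hk,
      chebU_mul_sub_one α κ hα hk, chebU_mul_sub_one β κ hβ hk]
    rcases h with h | h | h
    · rw [h]; ring
    · rw [h]; ring
    · rw [h]; ring
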